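/- Let U ⊂ ℝ² be open and connected, and let u ∈ C¹(U) with u ≥ 0 in U satisfy Δ_A u ≤ 0 in U in the weak sense (∫_U (a(|∇u|)/|∇u|)∇u·∇ζ dx ≥ 0 for all nonnegative ζ ∈ C_c^∞(U)), where a satisfies a(0)=0 and a₀ ≤ ta'(t)/a(t) ≤ a₁ for t>0. Then either u ≡ 0 in U or u > 0 everywhere in U. -/

import Mathlib

open RealInnerProductSpace

open MeasureTheory Metric Set Filter Topology Convolution

abbrev E2 := EuclideanSpace ℝ (Fin 2)

lemma aux_mono_inner {E : Type*} [NormedAddCommGroup E] [InnerProductSpace ℝ E] (a : ℝ → ℝ)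
    (hm : StrictMonoOn a (Ici 0)) (ha00 : a 0 = 0) (p q : E) (hpq : p ≠ q) :
    0 < ⟪(a ‖p‖ / ‖p‖) • p - (a ‖q‖ / ‖q‖) • q, p - q⟫ := by
  have hpos : ∀ t, 0 < t → 0 < a t := fun t ht => by
    have := hm (mem_Ici.2 le_rfl) (mem_Ici.2 ht.le) ht
    rwa [ha00] at this
  have key : ∀ z : E, (a ‖z‖ / ‖z‖) * ‖z‖ = a ‖z‖ := fun z => by
    rcases eq_or_ne z 0 with h | h
    · simp [h, ha00]
    · have : ‖z‖ ≠ 0 := by simpa using h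
      field_simp
  have knn : ∀ z : E, 0 ≤ a ‖z‖ / ‖z‖ := fun z => by
    rcases eq_or_ne z 0 with h | h
    · simp [h]
    · have : 0 < ‖z‖ := by simpa using h
      exact (div_pos (hpos _ this) this).le
  have kp : ∀ z : E, z ≠ 0 → 0 < a ‖z‖ / ‖z‖ := fun z h => by
      have : 0 < ‖z‖ := by simpa using h
      exact (div_pos (hpos _ this) this)
  have hexp : ⟪(a ‖p‖ / ‖p‖) • p - (a ‖q‖ / ‖q‖) • q, p - q⟫
      = (a ‖p‖ / ‖p‖) * ‖p‖ * ‖p‖ + (a ‖q‖ / ‖q‖) * ‖q‖ * ‖q‖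
        - (a ‖p‖ / ‖p‖ + a ‖q‖ / ‖q‖) * ⟪p, q⟫ := by
    simp only [inner_sub_left, inner_sub_right, real_inner_smul_left, real_inner_self_eq_norm_sq,
      real_inner_comm p q]
    ring
  have hcs := real_inner_le_norm p q
  rcases eq_or_ne ‖p‖ ‖q‖ with h | h
  · have hp : p ≠ 0 := by
      rintro rfl
      apply hpq
      rw [norm_zero] at h
      exact (norm_eq_zero.1 h.symm).symm
    have h1 : (a ‖p‖ / ‖p‖) • p - (a ‖q‖ / ‖q‖) • q = (a ‖p‖ / ‖p‖) • (p - q) := by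
      rw [← h, smul_sub]
    rw [h1, real_inner_smul_left, real_inner_self_eq_norm_sq]
    have : 0 < ‖p - q‖ := by simpa [sub_eq_zero] using hpq
    have := kp p hp
    positivity
  · rw [hexp]
    have h2 : 0 < (a ‖p‖ - a ‖q‖) * (‖p‖ - ‖q‖) := by
      rcases lt_or_gt_of_ne h with h | h
      · have := hm (mem_Ici.2 (norm_nonneg p)) (mem_Ici.2 (norm_nonneg q)) h
        exact mul_pos_of_neg_of_neg (by linarith) (by linarith)
      · have := hm (mem_Ici.2 (norm_nonneg q)) (mem_Ici.2 (norm_nonneg p)) h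
        exact mul_pos (by linarith) (by linarith)
    have h3 := mul_le_mul_of_nonneg_left hcs (add_nonneg (knn p) (knn q))
    have h4 : (a ‖p‖ / ‖p‖ + a ‖q‖ / ‖q‖) * (‖p‖ * ‖q‖) = a ‖p‖ * ‖q‖ + a ‖q‖ * ‖p‖ := by
      linear_combination ‖q‖ * key p + ‖p‖ * key q
    rw [key, key]
    nlinarith

lemma aux_cont {E : Type*} [NormedAddCommGroup E] [InnerProductSpace ℝ E] (a : ℝ → ℝ)
    (hc : ContinuousOn a (Ici 0)) (ha00 : a 0 = 0) :
    Continuous (fun p : E => (a ‖p‖ / ‖p‖) • p) := by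
  have hn : Continuous (fun p : E => a ‖p‖) :=
    hc.comp_continuous continuous_norm (fun x => norm_nonneg x)
  rw [continuous_iff_continuousAt]
  intro p
  rcases eq_or_ne p 0 with h | h
  · subst h
    have : Tendsto (fun p : E => (a ‖p‖ / ‖p‖) • p) (𝓝 0) (𝓝 0) := by
      rw [tendsto_zero_iff_norm_tendsto_zero]
      have h0 : Tendsto (fun p : E => |a ‖p‖|) (𝓝 0) (𝓝 0) := by
        have := hn.abs.tendsto (0 : E)
        simpa [ha00] using this
      refine squeeze_zero (fun _ => norm_nonneg _) (fun z => ?_) h0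
      rw [norm_smul, Real.norm_eq_abs, abs_div, abs_norm]
      rcases eq_or_ne z 0 with h | h
      · simp [h]
      · have : ‖z‖ ≠ 0 := by simpa using h
        rw [div_mul_cancel₀ _ this]
    simpa [ContinuousAt] using this
  · have : ‖p‖ ≠ 0 := by simpa using h
    exact (hn.continuousAt.div continuous_norm.continuousAt this).smul continuousAt_id

lemma aux_contDiff {E : Type*} [NormedAddCommGroup E] [NormedSpace ℝ E] {n : WithTop ℕ∞}
    {f : E → ℝ} {U : Set E}
    (hU : IsOpen U) (hf : ContDiffOn ℝ n f U) (hs : tsupport f ⊆ U) : ContDiff ℝ n f := by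
  refine contDiff_iff_contDiffAt.2 fun x => ?_
  by_cases hx : x ∈ U
  · exact hf.contDiffAt (hU.mem_nhds hx)
  · have : f =ᶠ[𝓝 x] fun _ => 0 := notMem_tsupport_iff_eventuallyEq.1 (fun h => hx (hs h))
    exact contDiffAt_const.congr_of_eventuallyEq this

lemma aux_mollify {ζ : E2 → ℝ} (hζ : ContDiff ℝ 1 ζ) (hc : HasCompactSupport ζ)
    (h0 : ∀ x, 0 ≤ ζ x) {δ ε : ℝ} (hδ : 0 < δ) (hε : 0 < ε) :
    ∃ η : E2 → ℝ, ContDiff ℝ (⊤ : ℕ∞) η ∧ tsupport η ⊆ cthickening δ (tsupport ζ) ∧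
      (∀ x, 0 ≤ η x) ∧ ∀ x, ‖fderiv ℝ η x - fderiv ℝ ζ x‖ ≤ ε := by
  have hdc : Continuous (fderiv ℝ ζ) := hζ.continuous_fderiv (by norm_num)
  have huc : UniformContinuous (fderiv ℝ ζ) :=
    (hc.fderiv ℝ).uniformContinuous_of_continuous hdc
  obtain ⟨r, hr, hr'⟩ := Metric.uniformContinuous_iff.1 huc ε hε
  set ρ := min r δ with hρ
  have hρ0 : 0 < ρ := lt_min hr hδ
  let φ : ContDiffBump (0 : E2) := ⟨ρ / 2, ρ, by linarith, by linarith⟩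
  refine ⟨φ.normed volume ⋆[ContinuousLinearMap.lsmul ℝ ℝ, volume] ζ, ?_, ?_, ?_, ?_⟩
  · exact φ.hasCompactSupport_normed.contDiff_convolution_left _ φ.contDiff_normed
      hζ.continuous.locallyIntegrable
  · refine closure_minimal ?_ isClosed_cthickening
    refine (support_convolution_subset _).trans ?_
    rintro x ⟨y, hy, z, hz, rfl⟩
    rw [φ.support_normed_eq] at hy
    refine mem_cthickening_of_dist_le _ z _ _ (subset_tsupport _ hz) ?_
    have : ‖y‖ < ρ := by simpa using hy
    simp only [dist_eq_norm, add_sub_cancel_right]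
    exact this.le.trans (min_le_right _ _)
  · intro x
    exact integral_nonneg fun t => by
      simpa using mul_nonneg (φ.nonneg_normed t) (h0 _)
  · intro x
    have h1 := hc.hasFDerivAt_convolution_right (ContinuousLinearMap.lsmul ℝ ℝ)
      (φ.continuous_normed (μ := volume)).locallyIntegrable hζ x (μ := volume)
    rw [h1.fderiv]
    have h2 := φ.dist_normed_convolution_le (x₀ := x) (μ := volume) (ε := ε)
      hdc.aestronglyMeasurable (fun z hz => (hr' (lt_of_lt_of_le hz (min_le_left _ _))).le)
    rw [dist_eq_norm] at h2
    exact h2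

lemma aux_extend {U : Set E2} (hU : IsOpen U) {G : E2 → E2} (hG : ContinuousOn G U)
    (h : ∀ ζ : E2 → ℝ, ContDiff ℝ (⊤ : ℕ∞) ζ →
      HasCompactSupport ζ → tsupport ζ ⊆ U → (∀ x, 0 ≤ ζ x) →
      0 ≤ ∫ x in U, ⟪G x, gradient ζ x⟫)
    {ζ : E2 → ℝ} (hζ : ContDiff ℝ 1 ζ) (hc : HasCompactSupport ζ) (hs : tsupport ζ ⊆ U)
    (h0 : ∀ x, 0 ≤ ζ x) : 0 ≤ ∫ x in U, fderiv ℝ ζ x (G x) := by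
  obtain ⟨δ, hδ, hδU⟩ := hc.isCompact.exists_cthickening_subset_open hU hs
  set K := cthickening δ (tsupport ζ) with hK
  have hKc : IsCompact K := hc.isCompact.cthickening
  have hGK : IntegrableOn G K := (hG.mono hδU).integrableOn_compact hKc
  have hint : ∀ η : E2 → ℝ, ContDiff ℝ 1 η → tsupport η ⊆ K →
      IntegrableOn (fun x => fderiv ℝ η x (G x)) K ∧
      ∫ x in U, fderiv ℝ η x (G x) = ∫ x in K, fderiv ℝ η x (G x) := by
    intro η hη hs
    constructor
    · refine ContinuousOn.integrableOn_compact hKc ?_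
      exact (hη.continuous_fderiv (by norm_num)).continuousOn.clm_apply (hG.mono hδU)
    · refine setIntegral_eq_of_subset_of_forall_sdiff_eq_zero hU.measurableSet hδU ?_
      intro x hx
      have : fderiv ℝ η x = 0 := by
        by_contra hne
        exact hx.2 (hs (support_fderiv_subset ℝ hne))
      simp [this]
  set C := ∫ x in K, ‖G x‖ with hC
  have hC0 : 0 ≤ C := integral_nonneg fun _ => norm_nonneg _
  have main : ∀ ε : ℝ, 0 < ε → -(ε * C) ≤ ∫ x in U, fderiv ℝ ζ x (G x) := by
    intro ε hε
    obtain ⟨η, hη, hηs, hη0, hηε⟩ := aux_mollify hζ hc h0 hδ hε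
    have hη1 : ContDiff ℝ 1 η := hη.of_le (by exact_mod_cast le_top)
    have h1 := h η hη (hKc.of_isClosed_subset (isClosed_tsupport _) hηs) (hηs.trans hδU) hη0
    simp only [inner_gradient_right, conj_trivial] at h1
    obtain ⟨i1, e1⟩ := hint η hη1 hηs
    obtain ⟨i2, e2⟩ := hint ζ hζ (self_subset_cthickening _)
    rw [e1] at h1
    rw [e2]
    have h3 : ∫ x in K, (fderiv ℝ η x (G x) - fderiv ℝ ζ x (G x)) ≤ ∫ x in K, ε * ‖G x‖ := by
      refine integral_mono (i1.sub i2) (hGK.norm.const_mul ε) fun x => ?_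
      have := (fderiv ℝ η x - fderiv ℝ ζ x).le_of_opNorm_le (hηε x) (G x)
      exact (le_abs_self _).trans this
    rw [integral_sub i1 i2, integral_const_mul] at h3
    linarith
  by_contra hneg
  push Not at hneg
  set I := ∫ x in U, fderiv ℝ ζ x (G x)
  have := main (-I / (2 * (C + 1))) (by apply div_pos <;> linarith)
  have h5 : -I / (2 * (C + 1)) * C < -I := by
    rw [div_mul_eq_mul_div, div_lt_iff₀ (by linarith)]
    nlinarith
  linarith

lemma aux_div {θ : E2 → ℝ} (hθ : ContDiff ℝ 1 θ) (hc : HasCompactSupport θ) (y : E2) :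
    ∫ x, fderiv ℝ θ x (x - y) = - (2 * ∫ x, θ x) := by
  have hfc : Continuous (fderiv ℝ θ) := hθ.continuous_fderiv (by norm_num)
  have hθi : Integrable θ := hθ.continuous.integrable_of_hasCompactSupport hc
  let e : Fin 2 → E2 := fun i => EuclideanSpace.single i (1 : ℝ)
  have hI : ∀ i, Integrable (fun x : E2 => (x i - y i) * fderiv ℝ θ x (e i)) := by
    intro i
    refine Continuous.integrable_of_hasCompactSupport ?_ ?_
    · fun_prop
    · refine HasCompactSupport.mul_left ?_
      exact (hc.fderiv ℝ).comp_left (g := fun L : E2 →L[ℝ] ℝ => L (e i)) (by simp)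
  have hd : ∀ i (x : E2), HasFDerivAt (fun x : E2 => x i - y i)
      (EuclideanSpace.proj i : E2 →L[ℝ] ℝ) x := by
    intro i x
    exact ((EuclideanSpace.proj i : E2 →L[ℝ] ℝ).hasFDerivAt).sub_const _
  have hi : ∀ i, ∫ x : E2, (x i - y i) * fderiv ℝ θ x (e i) = - ∫ x, θ x := by
    intro i
    have hone : ∀ x, fderiv ℝ (fun x : E2 => x i - y i) x (e i) = 1 := by
      intro x
      rw [(hd i x).fderiv]
      simp [e]
    have := integral_mul_fderiv_eq_neg_fderiv_mul_of_integrable (μ := (volume : Measure E2))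
      (f := fun x : E2 => x i - y i) (g := θ) (v := e i) ?_ (hI i) ?_
      (fun x _ => (hd i x).differentiableAt)
      (fun x _ => hθ.differentiable (by norm_num) x)
    · simpa only [hone, one_mul] using this
    · simpa only [hone, one_mul] using hθi
    · refine Continuous.integrable_of_hasCompactSupport ?_ hc.mul_left
      exact Continuous.mul (by fun_prop) hθ.continuous
  have hsum : ∀ x : E2, fderiv ℝ θ x (x - y) = ∑ i, (x i - y i) * fderiv ℝ θ x (e i) := by
    intro x
    have : x - y = ∑ i, (x i - y i) • e i := by
      ext j
      fin_cases j <;> simp [e]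
    conv_lhs => rw [this]
    simp
  simp_rw [hsum]
  rw [integral_finsetSum _ (fun i _ => hI i)]
  simp only [hi, Fin.sum_univ_two]
  ring

lemma aux_a_props (a a' : ℝ → ℝ) (a₀ : ℝ) (ha₀ : 0 < a₀)
    (hnonneg : ∀ t, 0 ≤ t → 0 ≤ a t)
    (hderiv : ∀ t, 0 ≤ t → HasDerivWithinAt a (a' t) (Set.Ici 0) t)
    (hlow : ∀ t, 0 < t → a₀ ≤ t * a' t / a t) :
    (∀ t, 0 < t → HasDerivAt a (a' t) t) ∧ (∀ t, 0 < t → 0 < a t) ∧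
    (∀ t, 0 < t → a₀ * a t ≤ t * a' t) ∧ StrictMonoOn a (Ici 0) := by
  have h1 : ∀ t, 0 < t → HasDerivAt a (a' t) t := fun t ht =>
    (hderiv t ht.le).hasDerivAt (Ici_mem_nhds ht)
  have h2 : ∀ t, 0 < t → 0 < a t := fun t ht => by
    refine lt_of_le_of_ne (hnonneg t ht.le) fun h => ?_
    have := hlow t ht
    rw [← h] at this
    simp at this
    linarith
  have h3 : ∀ t, 0 < t → a₀ * a t ≤ t * a' t := fun t ht =>
    (le_div_iff₀ (h2 t ht)).1 (hlow t ht)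
  refine ⟨h1, h2, h3, ?_⟩
  refine strictMonoOn_of_deriv_pos (convex_Ici 0) (fun t ht => (hderiv t ht).continuousWithinAt) ?_
  intro t ht
  rw [interior_Ici] at ht
  have ht : 0 < t := ht
  rw [(h1 t ht).deriv]
  have := h3 t ht
  have h4 := mul_pos ha₀ (h2 t ht)
  exact pos_of_mul_pos_right (lt_of_lt_of_le h4 this) ht.le

/-- The radial profile. -/
noncomputable def auxH (a : ℝ → ℝ) (c l : ℝ) (s : ℝ) : ℝ :=
  a (c * √s * Real.exp (-l * s)) / √s

lemma auxH_deriv (a a' : ℝ → ℝ) (c l a₀ : ℝ) (hc : 0 < c)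
    (h1 : ∀ t, 0 < t → HasDerivAt a (a' t) t) (h2 : ∀ t, 0 < t → 0 < a t)
    (h3 : ∀ t, 0 < t → a₀ * a t ≤ t * a' t) (ha₀ : 0 < a₀) (s : ℝ) (hs : 0 < s) :
    ∃ d, HasDerivAt (auxH a c l) d s ∧ (1 / a₀ ≤ 2 * l * s - 1 → s * d + auxH a c l s ≤ 0) := by
  have hr : 0 < √s := Real.sqrt_pos.2 hs
  have hrs : √s * √s = s := Real.mul_self_sqrt hs.le
  set g := c * √s * Real.exp (-l * s) with hg
  have hgp : 0 < g := by positivity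
  have hgd : HasDerivAt (fun s => c * √s * Real.exp (-l * s)) (g * (1 / (2 * s) - l)) s := by
    have e1 := (Real.hasDerivAt_sqrt hs.ne').const_mul c
    have e2 := ((hasDerivAt_id s).const_mul (-l)).exp
    refine (e1.fun_mul e2).congr_deriv ?_
    simp only [id, hg]
    field_simp
    rw [show √s ^ 2 = s by rw [sq, hrs]]
    ring
  have hH := ((h1 g hgp).comp s hgd).div (Real.hasDerivAt_sqrt hs.ne') hr.ne'
  refine ⟨_, hH, fun hl => ?_⟩
  have e : s * ((a' g * (g * (1 / (2 * s) - l)) * √s - (a ∘ fun s => c * √s * Real.exp (-l * s)) s * (1 / (2 * √s))) / √s ^ 2) + auxH a c l s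
      = (a g - (g * a' g) * (2 * l * s - 1)) / (2 * √s) := by
    simp only [auxH, Function.comp, ← hg]
    rw [show √s ^ 2 = s by rw [sq, hrs]]
    field_simp
    rw [show √s ^ 2 = s by rw [sq, hrs]]
    ring
  rw [e]
  refine div_nonpos_of_nonpos_of_nonneg ?_ (by positivity)
  have h5 := h3 g hgp
  have h6 := h2 g hgp
  have h7 : 0 < 1 / a₀ := by positivity
  have h8 : a₀ * a g * (1 / a₀) ≤ (g * a' g) * (2 * l * s - 1) :=
    mul_le_mul h5 hl h7.le (le_trans (by positivity) h5)
  have h9 : a₀ * a g * (1 / a₀) = a g := by field_simp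
  linarith

lemma auxH_contDiffOn (a a' : ℝ → ℝ) (c l : ℝ) (hc : 0 < c)
    (h1 : ∀ t, 0 < t → HasDerivAt a (a' t) t) (hcont : ContinuousOn a' (Ici 0)) :
    ContDiffOn ℝ 1 (auxH a c l) (Ioi 0) := by
  have ha : ContDiffOn ℝ 1 a (Ioi 0) := by
    rw [contDiffOn_one_iff_derivWithin isOpen_Ioi.uniqueDiffOn]
    refine ⟨fun t ht => (h1 t ht).differentiableAt.differentiableWithinAt, ?_⟩
    refine (hcont.mono Ioi_subset_Ici_self).congr fun t ht => ?_
    rw [derivWithin_of_isOpen isOpen_Ioi ht, (h1 t ht).deriv]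
  have hsq : ContDiffOn ℝ 1 (fun s : ℝ => √s) (Ioi 0) :=
    contDiffOn_id.sqrt (fun x hx => (ne_of_gt hx))
  refine ContDiffOn.div ?_ hsq (fun s hs => (Real.sqrt_pos.2 hs).ne')
  refine ha.comp (t := Ioi 0) (f := fun s => c * √s * Real.exp (-l * s)) ?_ ?_
  · refine (contDiffOn_const.mul hsq).mul ?_
    exact ContDiff.contDiffOn (by fun_prop)
  · intro s hs
    have := Real.sqrt_pos.2 hs
    exact mul_pos (mul_pos hc this) (Real.exp_pos _)

lemma aux_sub (a a' : ℝ → ℝ) (c l a₀ ρ : ℝ) (hc : 0 < c) (hl0 : 0 < l)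
    (h1 : ∀ t, 0 < t → HasDerivAt a (a' t) t) (h2 : ∀ t, 0 < t → 0 < a t)
    (h3 : ∀ t, 0 < t → a₀ * a t ≤ t * a' t) (ha₀ : 0 < a₀) (hcont : ContinuousOn a' (Ici 0))
    (hρ : 0 < ρ) (hl : 1 / a₀ ≤ 2 * l * ρ ^ 2 - 1) (y : E2)
    {ζ : E2 → ℝ} (hζ : ContDiff ℝ 1 ζ) (hcs : HasCompactSupport ζ)
    (hs : ∀ x ∈ tsupport ζ, ρ < ‖x - y‖) (h0 : ∀ x, 0 ≤ ζ x) :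
    Integrable (fun x => auxH a c l (‖x - y‖ ^ 2) * fderiv ℝ ζ x (x - y)) ∧
    0 ≤ ∫ x, auxH a c l (‖x - y‖ ^ 2) * fderiv ℝ ζ x (x - y) := by
  set H := auxH a c l with hH
  have hHc := auxH_contDiffOn a a' c l hc h1 hcont
  have hV : IsOpen {x : E2 | 0 < ‖x - y‖} := isOpen_lt continuous_const (by fun_prop)
  have hsV : tsupport ζ ⊆ {x : E2 | 0 < ‖x - y‖} := fun x hx => hρ.trans (hs x hx)
  have hHV : ContDiffOn ℝ 1 (fun x : E2 => H (‖x - y‖ ^ 2)) {x : E2 | 0 < ‖x - y‖} := by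
    refine hHc.comp (t := Ioi 0) (f := fun x : E2 => ‖x - y‖ ^ 2) ?_ ?_
    · exact ((contDiff_id.sub contDiff_const).norm_sq ℝ).contDiffOn
    · intro x hx
      have hx : 0 < ‖x - y‖ := hx
      exact mem_Ioi.2 (by positivity)
  set θ : E2 → ℝ := fun x => ζ x * H (‖x - y‖ ^ 2) with hθd
  have hθs : tsupport θ ⊆ tsupport ζ := closure_mono (Function.support_mul_subset_left _ _)
  have hθ : ContDiff ℝ 1 θ :=
    aux_contDiff hV (hζ.contDiffOn.mul hHV) (hθs.trans hsV)
  have hθc : HasCompactSupport θ := hcs.of_isClosed_subset (isClosed_tsupport _) hθs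
  have hdiv := aux_div hθ hθc y
  have hI : Integrable (fun x => H (‖x - y‖ ^ 2) * fderiv ℝ ζ x (x - y)) := by
    rw [← integrableOn_iff_integrable_of_support_subset (s := tsupport ζ)]
    · refine ContinuousOn.integrableOn_compact hcs ?_
      refine (hHV.continuousOn.mono hsV).mul ?_
      have := hζ.continuous_fderiv (by norm_num)
      exact Continuous.continuousOn (by fun_prop)
    · intro x hx
      by_contra hne
      apply hx
      have : fderiv ℝ ζ x = 0 := by
        by_contra h
        exact hne (support_fderiv_subset ℝ h)
      simp [this]
  refine ⟨hI, ?_⟩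
  have hθi : Integrable θ := hθ.continuous.integrable_of_hasCompactSupport hθc
  have hθ'i : Integrable (fun x => fderiv ℝ θ x (x - y)) := by
    have hfc := hθ.continuous_fderiv (by norm_num)
    refine Continuous.integrable_of_hasCompactSupport (by fun_prop) ?_
    refine hθc.mono' ?_
    intro x hx
    refine support_fderiv_subset ℝ (f := θ) fun h => hx ?_
    simp [h]
  have hpt : ∀ x, fderiv ℝ θ x (x - y) + 2 * θ x ≤ H (‖x - y‖ ^ 2) * fderiv ℝ ζ x (x - y) := by
    intro x
    by_cases hx : x ∈ tsupport ζ
    · have hxρ := hs x hx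
      have hpos : 0 < ‖x - y‖ := hρ.trans hxρ
      obtain ⟨d, hd, hd'⟩ := auxH_deriv a a' c l a₀ hc h1 h2 h3 ha₀ (‖x - y‖ ^ 2) (by positivity)
      have hd'' := hd' (hl.trans (by gcongr))
      have hn : HasFDerivAt (fun x : E2 => ‖x - y‖ ^ 2) (2 • innerSL ℝ (x - y)) x := by
        simpa using ((hasFDerivAt_id x).sub_const y).norm_sq
      have hθ' := ((hζ.differentiable (by norm_num) x).hasFDerivAt).mul
        (hd.comp_hasFDerivAt x hn)
      have e : fderiv ℝ θ x (x - y) = ζ x * (d * (2 * ‖x - y‖ ^ 2)) +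
          H (‖x - y‖ ^ 2) * fderiv ℝ ζ x (x - y) := by
        have := hθ'.fderiv
        change fderiv ℝ θ x = _ at this
        rw [this]
        have hin : ⟪x - y, x - y⟫ = ‖x - y‖ ^ 2 := real_inner_self_eq_norm_sq _
        simp only [add_apply, smul_apply, innerSL_apply_apply,
          hin, smul_eq_mul, nsmul_eq_mul, Function.comp_apply, hH]
        norm_num
      rw [e]
      simp only [hθd]
      nlinarith [mul_nonneg (h0 x) (sub_nonneg.2 hd'')]
    · have e1 : fderiv ℝ ζ x = 0 := by
        by_contra h
        exact hx (support_fderiv_subset ℝ h)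
      have e2 : fderiv ℝ θ x = 0 := by
        by_contra h
        exact hx (hθs (support_fderiv_subset ℝ h))
      have e3 : θ x = 0 := by
        simp [hθd, image_eq_zero_of_notMem_tsupport hx]
      simp [e1, e2, e3]
  have := integral_mono (hθ'i.add (hθi.const_mul 2)) hI hpt
  simp only [Pi.add_apply] at this
  rw [integral_add hθ'i (hθi.const_mul 2), integral_const_mul, hdiv] at this
  linarith

lemma aux_sqmax (t : ℝ) : HasDerivAt (fun t : ℝ => (max t 0) ^ 2) (2 * max t 0) t := by
  rcases lt_trichotomy t 0 with h | h | h
  · have : (fun t : ℝ => (max t 0) ^ 2) =ᶠ[𝓝 t] fun _ => 0 := by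
      filter_upwards [Iio_mem_nhds h] with s hs
      simp [max_eq_right (le_of_lt (mem_Iio.1 hs))]
    rw [max_eq_right h.le, mul_zero]
    exact (hasDerivAt_const t (0 : ℝ)).congr_of_eventuallyEq this
  · subst h
    rw [hasDerivAt_iff_isLittleO_nhds_zero]
    have h1 : (fun h : ℝ => h ^ 2) =o[𝓝 0] fun h => h := by
      simpa using Asymptotics.isLittleO_pow_id (𝕜 := ℝ) (n := 2) (by norm_num)
    refine Asymptotics.IsBigO.trans_isLittleO ?_ h1
    refine Asymptotics.IsBigO.of_bound 1 (Eventually.of_forall fun s => ?_)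
    simp only [zero_add, max_self, mul_zero, smul_zero, sub_zero, one_mul, Real.norm_eq_abs]
    rw [show (0:ℝ)^2 = 0 by norm_num, sub_zero, abs_pow, abs_pow]
    refine pow_le_pow_left₀ (abs_nonneg _) ?_ 2
    rw [abs_of_nonneg (le_max_right s 0)]
    exact max_le (le_abs_self s) (abs_nonneg s)
  · have : (fun t : ℝ => (max t 0) ^ 2) =ᶠ[𝓝 t] fun s => s ^ 2 := by
      filter_upwards [Ioi_mem_nhds h] with s hs
      simp [max_eq_left (le_of_lt (mem_Ioi.1 hs))]
    rw [max_eq_left h.le]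
    exact (by simpa using hasDerivAt_pow 2 t : HasDerivAt (fun s : ℝ => s ^ 2) (2 * t) t).congr_of_eventuallyEq this

lemma aux_sqmax_contDiff : ContDiff ℝ 1 (fun t : ℝ => (max t 0) ^ 2) := by
  rw [contDiff_one_iff_deriv]
  refine ⟨fun t => (aux_sqmax t).differentiableAt, ?_⟩
  have : deriv (fun t : ℝ => (max t 0) ^ 2) = fun t => 2 * max t 0 :=
    funext fun t => (aux_sqmax t).deriv
  rw [this]
  fun_prop

lemma aux_ball (a a' : ℝ → ℝ) (a₀ : ℝ)
    (ha₀ : 0 < a₀)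
    (hnonneg : ∀ t, 0 ≤ t → 0 ≤ a t) (ha00 : a 0 = 0)
    (hderiv : ∀ t, 0 ≤ t → HasDerivWithinAt a (a' t) (Set.Ici 0) t)
    (hcont : ContinuousOn a' (Set.Ici 0))
    (hlow : ∀ t, 0 < t → a₀ ≤ t * a' t / a t)
    (U : Set E2) (hUo : IsOpen U)
    (u : E2 → ℝ) (hu : ContDiffOn ℝ 1 u U)
    (hupos : ∀ x ∈ U, 0 ≤ u x)
    (hsuper : ∀ ζ : E2 → ℝ, ContDiff ℝ (⊤ : ℕ∞) ζ →
      HasCompactSupport ζ → tsupport ζ ⊆ U → (∀ x, 0 ≤ ζ x) →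
      0 ≤ ∫ x in U,
        ⟪(a ‖gradient u x‖ / ‖gradient u x‖) • gradient u x, gradient ζ x⟫)
    (y : E2) (R : ℝ) (hR : closedBall y R ⊆ U) (huy : 0 < u y) (x₀ : E2) (hx₀ : x₀ ∈ ball y R) :
    0 < u x₀ := by
  obtain ⟨h1, h2, h3, hm⟩ := aux_a_props a a' a₀ ha₀ hnonneg hderiv hlow
  have hac : ContinuousOn a (Ici 0) := fun t ht => (hderiv t ht).continuousWithinAt
  have hR0 : 0 < R := pos_of_mem_ball hx₀
  have hyU : y ∈ U := hR (mem_closedBall_self hR0.le)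
  have huc : ContinuousOn u U := hu.continuousOn
  set k := u y / 2 with hk
  have hk0 : 0 < k := by positivity
  obtain ⟨ρ, hρ, hρk⟩ : ∃ ρ > 0, ∀ x, ‖x - y‖ ≤ ρ → k < u x := by
    have : ∀ᶠ x in 𝓝 y, k < u x :=
      (huc.continuousAt (hUo.mem_nhds hyU)).eventually (lt_mem_nhds (by rw [hk]; linarith))
    obtain ⟨ρ, hρ, h⟩ := Metric.nhds_basis_closedBall.eventually_iff.1 this
    exact ⟨ρ, hρ, fun x hx => h (by simpa [dist_eq_norm] using hx)⟩
  set l := (1 + 1 / a₀) / (2 * ρ ^ 2) with hl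
  have hl0 : 0 < l := by positivity
  have hlρ : 1 / a₀ ≤ 2 * l * ρ ^ 2 - 1 := by
    apply le_of_eq
    rw [hl]
    field_simp
    ring
  set c := 2 * l * k with hcdef
  have hc : 0 < c := by positivity
  -- the barrier
  set v : E2 → ℝ := fun x => k * (Real.exp (-l * ‖x - y‖ ^ 2) - Real.exp (-l * R ^ 2)) with hv
  set p : E2 → E2 := fun x => (-(c * Real.exp (-l * ‖x - y‖ ^ 2))) • (x - y) with hp
  have hpc : Continuous p := by rw [hp]; fun_prop
  have hvC : ContDiff ℝ 1 v := by
    have : ContDiff ℝ 1 (fun x : E2 => ‖x - y‖ ^ 2) := (contDiff_id.sub contDiff_const).norm_sq ℝ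
    rw [hv]
    fun_prop
  have hvd : ∀ x, HasFDerivAt v (innerSL ℝ (p x)) x := by
    intro x
    have hn : HasFDerivAt (fun x : E2 => ‖x - y‖ ^ 2) (2 • innerSL ℝ (x - y)) x := by
      simpa using ((hasFDerivAt_id x).sub_const y).norm_sq
    have := (((hn.const_mul (-l)).exp).sub_const (Real.exp (-l * R ^ 2))).const_mul k
    refine this.congr_fderiv ?_
    ext z
    simp only [hp, hcdef, smul_apply, innerSL_apply_apply, real_inner_smul_left, smul_eq_mul, nsmul_eq_mul]
    push_cast
    ring
  have hvk : ∀ x, v x < k := by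
    intro x
    have e1 : Real.exp (-l * ‖x - y‖ ^ 2) ≤ 1 := by
      rw [Real.exp_le_one_iff]
      have : 0 ≤ l * ‖x - y‖ ^ 2 := by positivity
      linarith
    have e2 := Real.exp_pos (-l * R ^ 2)
    simp only [hv]
    nlinarith
  have hvpos : ∀ x, 0 < v x ↔ ‖x - y‖ < R := by
    intro x
    simp only [hv]
    rw [mul_pos_iff_of_pos_left hk0, sub_pos, Real.exp_lt_exp, ← sq_lt_sq₀ (norm_nonneg _) hR0.le]
    constructor <;> intro h <;> nlinarith
  -- flux of the barrier
  set F : E2 → E2 := fun z => (a ‖z‖ / ‖z‖) • z with hF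
  have hFc : Continuous F := aux_cont a hac ha00
  have hFp : ∀ x, F (p x) = -(auxH a c l (‖x - y‖ ^ 2) • (x - y)) := by
    intro x
    rcases eq_or_ne x y with h | h
    · simp [hF, hp, h]
    · have hxy : 0 < ‖x - y‖ := by simpa [sub_eq_zero] using h
      have hnp : ‖p x‖ = c * ‖x - y‖ * Real.exp (-l * ‖x - y‖ ^ 2) := by
        simp only [hp, norm_smul, norm_neg, Real.norm_eq_abs]
        rw [abs_of_pos (by positivity)]
        ring
      simp only [hF, auxH, hnp, Real.sqrt_sq (norm_nonneg (x - y))]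
      simp only [hp, smul_smul, ← neg_smul]
      congr 1
      field_simp
  have hgu : ContinuousOn (gradient u) U := by
    have : ContinuousOn (fderiv ℝ u) U := hu.continuousOn_fderiv_of_isOpen hUo (by norm_num)
    exact (InnerProductSpace.toDual ℝ E2).symm.continuous.comp_continuousOn this
  have hGc : ContinuousOn (fun x => F (gradient u x)) U := hFc.comp_continuousOn hgu
  -- comparison
  suffices hcomp : ∀ ε > 0, v x₀ - ε ≤ u x₀ by
    have h4 : 0 < v x₀ := (hvpos x₀).2 (by simpa [dist_eq_norm] using hx₀)
    have := hcomp (v x₀ / 2) (by positivity)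
    linarith
  intro ε hε
  set w : E2 → ℝ := fun x => v x - u x - ε with hw
  have hwC : ContDiffOn ℝ 1 w U := (hvC.contDiffOn.sub hu).sub contDiffOn_const
  set ζ : E2 → ℝ := (closedBall y R).indicator (fun x => (max (w x) 0) ^ 2) with hζ
  have hζU : EqOn ζ (fun x => (max (w x) 0) ^ 2) U := by
    intro x hx
    by_cases hxB : x ∈ closedBall y R
    · simp [hζ, hxB]
    · have : v x ≤ 0 := by
        by_contra h
        have := (hvpos x).1 (not_le.1 h)
        exact hxB (by simpa [dist_eq_norm] using this.le)
      have h5 := hupos x hx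
      have h6 : w x ≤ 0 := by simp only [hw]; linarith
      simp [hζ, hxB, max_eq_right h6]
  set K := closedBall y R ∩ w ⁻¹' Ici 0 with hK
  have hKcl : IsClosed K :=
    (hwC.continuousOn.mono hR).preimage_isClosed_of_isClosed isClosed_closedBall isClosed_Ici
  have hKcomp : IsCompact K := (isCompact_closedBall y R).of_isClosed_subset hKcl inter_subset_left
  have hts : tsupport ζ ⊆ K := by
    refine closure_minimal ?_ hKcl
    intro x hx
    have hxB : x ∈ closedBall y R := by
      by_contra h
      exact hx (by simp [hζ, h])
    refine ⟨hxB, ?_⟩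
    by_contra h
    have h : w x < 0 := by simpa using h
    exact hx (by simp [hζ, max_eq_right h.le])
  have hKU : K ⊆ U := inter_subset_left.trans hR
  have hcs : HasCompactSupport ζ := hKcomp.of_isClosed_subset (isClosed_tsupport _) hts
  have hζC : ContDiff ℝ 1 ζ :=
    aux_contDiff hUo ((aux_sqmax_contDiff.comp_contDiffOn hwC).congr hζU) (hts.trans hKU)
  have hζ0 : ∀ x, 0 ≤ ζ x := fun x => indicator_nonneg (fun _ _ => sq_nonneg _) x
  have hKρ : ∀ x ∈ tsupport ζ, ρ < ‖x - y‖ := by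
    intro x hx
    have h5 : 0 ≤ w x := (hts hx).2
    by_contra h
    have h6 := hρk x (not_lt.1 h)
    have h7 := hvk x
    simp only [hw] at h5
    linarith
  have hζd : ∀ x ∈ U, ∀ z, fderiv ℝ ζ x z = 2 * max (w x) 0 * ⟪p x - gradient u x, z⟫ := by
    intro x hx z
    have hud : HasFDerivAt u (fderiv ℝ u x) x :=
      ((hu.differentiableOn (by norm_num)).differentiableAt (hUo.mem_nhds hx)).hasFDerivAt
    have hwd : HasFDerivAt w (innerSL ℝ (p x) - fderiv ℝ u x) x := ((hvd x).sub hud).sub_const ε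
    have hd := (aux_sqmax (w x)).comp_hasFDerivAt x hwd
    have hev : ζ =ᶠ[𝓝 x] (fun t : ℝ => (max t 0) ^ 2) ∘ w := by
      filter_upwards [hUo.mem_nhds hx] with x' hx' using hζU hx'
    rw [(hd.congr_of_eventuallyEq hev).fderiv]
    simp [inner_sub_left, inner_gradient_left]
  have hout : ∀ x, x ∉ U → fderiv ℝ ζ x = 0 := by
    intro x hx
    by_contra h
    exact hx (hKU (hts (support_fderiv_subset ℝ h)))
  have i1 : 0 ≤ ∫ x in U, fderiv ℝ ζ x (F (gradient u x)) :=
    aux_extend hUo hGc hsuper hζC hcs (hts.trans hKU) hζ0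
  obtain ⟨j2, i2⟩ := aux_sub a a' c l a₀ ρ hc hl0 h1 h2 h3 ha₀ hcont hρ hlρ y hζC hcs hKρ hζ0
  have hfp : ∀ x, fderiv ℝ ζ x (F (p x)) =
      -(auxH a c l (‖x - y‖ ^ 2) * fderiv ℝ ζ x (x - y)) := by
    intro x
    rw [hFp, map_neg, map_smul, smul_eq_mul]
  have j2' : Integrable (fun x => fderiv ℝ ζ x (F (p x))) := by
    simp_rw [hfp]
    exact j2.neg
  have i2' : ∫ x in U, fderiv ℝ ζ x (F (p x)) ≤ 0 := by
    rw [setIntegral_eq_integral_of_forall_compl_eq_zero (fun x hx => by simp [hout x hx])]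
    simp_rw [hfp]
    rw [integral_neg]
    linarith
  have hfc : Continuous (fderiv ℝ ζ) := hζC.continuous_fderiv (by norm_num)
  have j1 : IntegrableOn (fun x => fderiv ℝ ζ x (F (gradient u x))) U := by
    have hK1 : IntegrableOn (fun x => fderiv ℝ ζ x (F (gradient u x))) K :=
      ContinuousOn.integrableOn_compact hKcomp (hfc.continuousOn.clm_apply (hGc.mono hKU))
    refine Integrable.integrableOn ?_
    rw [← integrableOn_iff_integrable_of_support_subset (s := K)]
    · exact hK1
    · intro x hx
      by_contra hne
      apply hx
      have : fderiv ℝ ζ x = 0 := by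
        by_contra h
        exact hne (hts (support_fderiv_subset ℝ h))
      simp [this]
  set Q : E2 → ℝ := fun x => fderiv ℝ ζ x (F (p x)) - fderiv ℝ ζ x (F (gradient u x)) with hQ
  have hQe : ∀ x ∈ U, Q x = 2 * max (w x) 0 * ⟪F (p x) - F (gradient u x), p x - gradient u x⟫ := by
    intro x hx
    simp only [hQ]
    rw [← map_sub, hζd x hx, real_inner_comm]
  have hmono : ∀ z z' : E2, 0 ≤ ⟪F z - F z', z - z'⟫ := by
    intro z z'
    rcases eq_or_ne z z' with h | h
    · simp [h]
    · exact (aux_mono_inner a hm ha00 z z' h).le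
  have hQ0 : ∀ x ∈ U, 0 ≤ Q x := by
    intro x hx
    rw [hQe x hx]
    exact mul_nonneg (mul_nonneg (by norm_num) (le_max_right _ _)) (hmono _ _)
  have hQi : IntegrableOn Q U := j2'.integrableOn.sub j1
  have hQint : ∫ x in U, Q x = 0 := by
    refine le_antisymm ?_ (setIntegral_nonneg hUo.measurableSet hQ0)
    simp only [hQ]
    rw [integral_sub j2'.integrableOn j1]
    linarith
  have hQae : Q =ᵐ[volume.restrict U] 0 :=
    (setIntegral_eq_zero_iff_of_nonneg_ae (ae_restrict_of_forall_mem hUo.measurableSet hQ0) hQi).1 hQint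
  have hQc : ContinuousOn Q U :=
    (hfc.clm_apply (hFc.comp hpc)).continuousOn.sub (hfc.continuousOn.clm_apply hGc)
  have hQz : EqOn Q 0 U := Measure.eqOn_open_of_ae_eq hQae hUo hQc continuousOn_const
  have hfz : ∀ x, fderiv ℝ ζ x = 0 := by
    intro x
    by_cases hx : x ∈ U
    · ext z
      rw [hζd x hx]
      have h5 := hQz hx
      rw [hQe x hx] at h5
      rcases eq_or_ne (p x) (gradient u x) with h | h
      · simp [h]
      · have h6 := aux_mono_inner a hm ha00 _ _ h
        have h7 : 2 * max (w x) 0 = 0 := (mul_eq_zero.1 h5).resolve_right h6.ne'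
        simp [h7]
    · exact hout x hx
  have hconst : ζ x₀ = ζ y := is_const_of_fderiv_eq_zero (hζC.differentiable (by norm_num)) hfz x₀ y
  have hζy : ζ y = 0 := by
    rw [hζU hyU]
    have h6 := hρk y (by simpa using hρ.le)
    have h7 := hvk y
    have : w y ≤ 0 := by simp only [hw]; linarith
    simp [max_eq_right this]
  rw [hζy, hζU (hR (ball_subset_closedBall hx₀))] at hconst
  have h8 : max (w x₀) 0 = 0 := by simpa using hconst
  have h9 : w x₀ ≤ 0 := h8 ▸ le_max_left _ _
  simp only [hw] at h9
  linarith

/-- Strong maximum principle for the A-Laplacian: if `u ∈ C¹(U)`, `u ≥ 0` in the open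
connected set `U ⊂ ℝ²`, and `Δ_A u ≤ 0` weakly in `U` (i.e.
`∫_U (a(|∇u|)/|∇u|) ∇u · ∇ζ ≥ 0` for all nonnegative `ζ ∈ C_c^∞(U)`),
then `u ≡ 0` in `U` or `u > 0` everywhere in `U`. -/
theorem stmt_10 (a a' : ℝ → ℝ) (a₀ a₁ : ℝ)
    (ha₀ : 0 < a₀) (ha₀₁ : a₀ ≤ a₁)
    (hnonneg : ∀ t, 0 ≤ t → 0 ≤ a t) (ha00 : a 0 = 0)
    (hderiv : ∀ t, 0 ≤ t → HasDerivWithinAt a (a' t) (Set.Ici 0) t)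
    (hcont : ContinuousOn a' (Set.Ici 0))
    (hlow : ∀ t, 0 < t → a₀ ≤ t * a' t / a t)
    (hhigh : ∀ t, 0 < t → t * a' t / a t ≤ a₁)
    (U : Set (EuclideanSpace ℝ (Fin 2))) (hUo : IsOpen U) (hUc : IsConnected U)
    (u : EuclideanSpace ℝ (Fin 2) → ℝ) (hu : ContDiffOn ℝ 1 u U)
    (hupos : ∀ x ∈ U, 0 ≤ u x)
    (hsuper : ∀ ζ : EuclideanSpace ℝ (Fin 2) → ℝ, ContDiff ℝ (⊤ : ℕ∞) ζ →
      HasCompactSupport ζ → tsupport ζ ⊆ U → (∀ x, 0 ≤ ζ x) →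
      0 ≤ ∫ x in U,
        ⟪(a ‖gradient u x‖ / ‖gradient u x‖) • gradient u x, gradient ζ x⟫) :
    (∀ x ∈ U, u x = 0) ∨ (∀ x ∈ U, 0 < u x) := by
  by_contra hcon
  push Not at hcon
  obtain ⟨⟨x₁, hx₁U, hx₁⟩, ⟨x₂, hx₂U, hx₂⟩⟩ := hcon
  have huc : ContinuousOn u U := hu.continuousOn
  have hVo : IsOpen (U ∩ u ⁻¹' Ioi 0) := huc.isOpen_inter_preimage hUo isOpen_Ioi
  have hZo : IsOpen (U ∩ u ⁻¹' Iic 0) := by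
    rw [Metric.isOpen_iff]
    rintro x ⟨hxU, hx⟩
    obtain ⟨r, hr, hrU⟩ := Metric.nhds_basis_closedBall.mem_iff.1 (hUo.mem_nhds hxU)
    refine ⟨r / 2, by positivity, fun z hz => ?_⟩
    have hz' : dist z x < r / 2 := hz
    refine ⟨hrU (mem_closedBall.2 (by linarith)), ?_⟩
    by_contra hpos
    have hpos : 0 < u z := not_le.1 hpos
    have := aux_ball a a' a₀ ha₀ hnonneg ha00 hderiv hcont hlow U hUo u hu hupos hsuper z (r / 2)
      (fun q hq => hrU ?_) hpos x (by rw [mem_ball, dist_comm]; exact hz')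
    · exact absurd hx (not_le.2 this)
    · have hq' : dist q z ≤ r / 2 := hq
      have := dist_triangle q z x
      exact mem_closedBall.2 (by linarith)
  have hcov : U ⊆ (U ∩ u ⁻¹' Ioi 0) ∪ (U ∩ u ⁻¹' Iic 0) := by
    intro x hx
    rcases lt_or_ge 0 (u x) with h | h
    · exact Or.inl ⟨hx, h⟩
    · exact Or.inr ⟨hx, h⟩
  obtain ⟨z, -, hz1, hz2⟩ := hUc.isPreconnected _ _ hVo hZo hcov
    ⟨x₁, hx₁U, hx₁U, lt_of_le_of_ne (hupos x₁ hx₁U) (Ne.symm hx₁)⟩ ⟨x₂, hx₂U, hx₂U, hx₂⟩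
  exact absurd (show u z ≤ 0 from hz2.2) (not_le.2 hz1.2)
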